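/- Let X be the almost invariant set arising from a splitting of G over H, and let Y be the almost invariant set arising from a splitting of G over K. If two of the four corners X∩Y, X∩Y*, X*∩Y, X*∩Y* of the pair (X,Y) are H-finite, then H = K. -/

import Mathlib

/-!
Write `gY` for a left translate. Let `Y` be the standard set of an edge `e = (a, b)` of a
splitting over `K`. For `g ∉ K` the edges `e` and `ge` differ, so their half-trees are strictly
nested, or disjoint, or cover the tree; correspondingly `Y` and `gY` are nested, or disjoint, or
cover `G`. If the half-tree of `e` is strictly contained in that of `ge`, then the edges `gⁿe` are
distinct, so a finite path cannot cross all of them and `⋃ gⁿY = G`; this is recorded as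
`IsAbsorbing g⁻¹ Y`. Moreover a splitting always has an element translating `e` coherently in
this sense (`GTree.IsSplitting.exists_translate`). These properties, collected in `SplitLike`,
suffice.

* If `s` is absorbing for `Y` and `Y` is `H`-finite, then two powers of `s` lie in one right coset of
  `H`, so some `sᵐ`, `m > 0`, lies in `H`. When `Y = X` is the standard set over `H`, this forces
  `X = G`, a contradiction; so neither `X` nor `X*` is `H`-finite. In general it forces `G` itself
  to be `H`-finite, again a contradiction (`SplitLike.not_hFinite`). Hence two small
  corners lie diagonally, and after replacing `Y` by `Y*` the set `X ∆ Y` is `H`-finite.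
* If `X ∆ Y` is `H`-finite, then, off an `H`-finite set, `Y` is invariant under each `h ∈ H`.
  If `h ∉ K`, each possible position of `Y` and `hY` makes `Y` or `Y*` an `H`-finite set, which
  was excluded. So `H ≤ K`; then `X ∆ Y` is `K`-finite too, and by symmetry `K ≤ H`.
-/

open scoped Pointwise

universe u v w

/-- A subset `S` of `G` is `H`-finite if it is contained in the union of
finitely many right cosets `Hg` of `H` in `G`. -/
def HFinite {G : Type u} [Group G] (H : Subgroup G) (S : Set G) : Prop :=
  ∃ F : Finset G, S ⊆ ⋃ g ∈ F, (H : Set G) * {g}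

/-- Two subsets of `G` are `H`-almost equal if their symmetric difference is `H`-finite. -/
def HAlmostEqual {G : Type u} [Group G] (H : Subgroup G) (A B : Set G) : Prop :=
  HFinite H ((A \ B) ∪ (B \ A))

/-- `X` is an `H`-almost invariant subset of `G`: `hX = X` for all `h ∈ H`, and for
every `g ∈ G` the symmetric difference of `Xg` and `X` is `H`-finite. -/
def IsAlmostInvariant {G : Type u} [Group G] (H : Subgroup G) (X : Set G) : Prop :=
  (∀ h ∈ H, (fun x => h * x) '' X = X) ∧
    ∀ g : G, HAlmostEqual H ((fun x => x * g) '' X) X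

/-- An `H`-almost invariant set is nontrivial if neither it nor its complement is `H`-finite. -/
def IsNontrivialAI {G : Type u} [Group G] (H : Subgroup G) (X : Set G) : Prop :=
  ¬ HFinite H X ∧ ¬ HFinite H Xᶜ

/-- A `G`-tree: a connected acyclic simple graph together with an action of `G` on its
vertices by graph automorphisms, such that no element of `G` interchanges the two
endpoints of any edge. -/
structure GTree (G : Type u) [Group G] (V : Type v) where
  graph : SimpleGraph V
  smul : G → V → V
  smul_one : ∀ x : V, smul 1 x = x
  smul_mul : ∀ (g h : G) (x : V), smul (g * h) x = smul g (smul h x)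
  adj_smul : ∀ (g : G) (x y : V), graph.Adj x y → graph.Adj (smul g x) (smul g y)
  no_inversion : ∀ (g : G) (x y : V), graph.Adj x y → ¬ (smul g x = y ∧ smul g y = x)
  connected : graph.Connected
  acyclic : graph.IsAcyclic

namespace GTree

variable {G : Type u} [Group G] {V : Type v}

/-- The stabilizer of the directed edge `(a, b)`. -/
def edgeStab (T : GTree G V) (a b : V) : Subgroup G where
  carrier := {g : G | T.smul g a = a ∧ T.smul g b = b}
  one_mem' := ⟨T.smul_one a, T.smul_one b⟩
  mul_mem' := by
    rintro x y ⟨hxa, hxb⟩ ⟨hya, hyb⟩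
    exact ⟨by rw [T.smul_mul, hya, hxa], by rw [T.smul_mul, hyb, hxb]⟩
  inv_mem' := by
    rintro x ⟨hxa, hxb⟩
    constructor
    · conv_lhs => rw [← hxa]
      rw [← T.smul_mul, inv_mul_cancel, T.smul_one]
    · conv_lhs => rw [← hxb]
      rw [← T.smul_mul, inv_mul_cancel, T.smul_one]

/-- The `a`-side of the directed edge `(a, b)`: the set of vertices reachable from `a`
after deleting the edge `{a, b}`. -/
def side (T : GTree G V) (a b : V) : Set V :=
  {x : V | (T.graph.deleteEdges {s(a, b)}).Reachable a x}

/-- The standard set determined by the directed edge `(a, b)` and the base vertex `v`: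
`{g ∈ G | g • v lies in the a-side of (a, b)}`. -/
def standardSet (T : GTree G V) (a b : V) (v : V) : Set G :=
  {g : G | T.smul g v ∈ T.side a b}

/-- `(T, a, b)` is a splitting of `G` over `H`: the `G`-tree `T` has no global fixed
vertex, `G` acts transitively on the undirected edges, `(a, b)` is a directed edge,
and the stabilizer of `(a, b)` is `H`. -/
def IsSplitting (T : GTree G V) (a b : V) (H : Subgroup G) : Prop :=
  T.graph.Adj a b ∧
  (∀ x : V, ∃ g : G, T.smul g x ≠ x) ∧
  (∀ c d : V, T.graph.Adj c d →
    ∃ g : G, (T.smul g a = c ∧ T.smul g b = d) ∨ (T.smul g a = d ∧ T.smul g b = c)) ∧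
  T.edgeStab a b = H

/-- Two `G`-trees are (`G`-equivariantly) isomorphic: there is a graph isomorphism
commuting with the `G`-actions. -/
def EquivIso {V₁ : Type v} {V₂ : Type w} (T₁ : GTree G V₁) (T₂ : GTree G V₂) : Prop :=
  ∃ f : T₁.graph ≃g T₂.graph, ∀ (g : G) (x : V₁), f (T₁.smul g x) = T₂.smul g (f x)

end GTree

/-- `Σ(X)`: the family of all translates of `X` and of its complement. -/
def TransSet {G : Type u} [Group G] (X : Set G) : Set (Set G) :=
  {A : Set G | ∃ g : G, A = g • X ∨ A = (g • X)ᶜ}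

/-- A corner `C` of a pair `(A, B)` is small if it is `Stab(A)`-finite. -/
def SmallCorner {G : Type u} [Group G] (A C : Set G) : Prop :=
  HFinite (MulAction.stabilizer G A) C

/-- At least two of four statements hold. -/
def TwoOfFour (P₁ P₂ P₃ P₄ : Prop) : Prop :=
  (P₁ ∧ P₂) ∨ (P₁ ∧ P₃) ∨ (P₁ ∧ P₄) ∨ (P₂ ∧ P₃) ∨ (P₂ ∧ P₄) ∨ (P₃ ∧ P₄)

/-- Almost inclusion: `A ≤ B` iff `A ∩ B*` is empty or is the only small corner of `(A, B)`. -/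
def AILE {G : Type u} [Group G] (A B : Set G) : Prop :=
  A ∩ Bᶜ = ∅ ∨
    (SmallCorner A (A ∩ Bᶜ) ∧ ¬ SmallCorner A (A ∩ B) ∧ ¬ SmallCorner A (Aᶜ ∩ B) ∧ ¬ SmallCorner A (Aᶜ ∩ Bᶜ))

/-- `A` crosses `B`: no corner of the pair `(A, B)` is small. -/
def AICrosses {G : Type u} [Group G] (A B : Set G) : Prop :=
  ¬ SmallCorner A (A ∩ B) ∧ ¬ SmallCorner A (A ∩ Bᶜ) ∧ ¬ SmallCorner A (Aᶜ ∩ B) ∧ ¬ SmallCorner A (Aᶜ ∩ Bᶜ)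

/-- A finite family of almost invariant sets satisfies sandwiching. -/
def Sandwiching {G : Type u} [Group G] {n : ℕ} (X : Fin n → Set G) : Prop :=
  ∀ j k : Fin n,
    (∃ A ∈ TransSet (X k), ∃ B ∈ TransSet (X k), AILE A (X j) ∧ AILE (X j) B) ∨
    ∀ A ∈ TransSet (X k), AICrosses (X j) A

/-- The splitting over `H` is a trivially ascending HNN extension: `H` is normal in `G`
and `G/H` is infinite cyclic. -/
def TrivAscHNN {G : Type u} [Group G] (H : Subgroup G) : Prop :=
  H.Normal ∧ ∃ t : G, (∀ g : G, ∃ n : ℤ, g * (t ^ n)⁻¹ ∈ H) ∧ ∀ n : ℤ, t ^ n ∈ H → n = 0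

/-- Two subsets are nested if one of the four inclusions among them and their
complements holds. -/
def Nested {G : Type u} (A B : Set G) : Prop :=
  A ⊆ B ∨ A ⊆ Bᶜ ∨ Aᶜ ⊆ B ∨ Aᶜ ⊆ Bᶜ

/-- `X` crosses `Y` with respect to the subgroup `L`: no corner of `(X, Y)` is `L`-finite. -/
def CrossesWrt {G : Type u} [Group G] (L : Subgroup G) (X Y : Set G) : Prop :=
  ¬ HFinite L (X ∩ Y) ∧ ¬ HFinite L (X ∩ Yᶜ) ∧ ¬ HFinite L (Xᶜ ∩ Y) ∧ ¬ HFinite L (Xᶜ ∩ Yᶜ)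

/-! ### Half-trees -/

namespace GTree

variable {G : Type u} [Group G] {V : Type v} (T : GTree G V)

lemma smul_inv_smul (g : G) (x : V) : T.smul g (T.smul g⁻¹ x) = x := by
  rw [← T.smul_mul, mul_inv_cancel, T.smul_one]

lemma inv_smul_smul (g : G) (x : V) : T.smul g⁻¹ (T.smul g x) = x := by
  rw [← T.smul_mul, inv_mul_cancel, T.smul_one]

lemma smul_inj (g : G) {x y : V} (h : T.smul g x = T.smul g y) : x = y := by
  rw [← T.inv_smul_smul g x, h, T.inv_smul_smul]

lemma mem_side_self (a b : V) : a ∈ T.side a b := SimpleGraph.Reachable.refl _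

lemma side_step {a b y z : V} (h : T.graph.Adj y z) (hne : s(y, z) ≠ s(a, b))
    (hy : y ∈ T.side a b) : z ∈ T.side a b := by
  refine SimpleGraph.Reachable.trans hy (SimpleGraph.Adj.reachable ?_)
  rw [SimpleGraph.deleteEdges_adj]
  exact ⟨h, by simpa using hne⟩

/-- Membership in a half-tree may be proved by induction along edges other than `{a, b}`. -/
lemma side_induction {a b : V} {P : V → Prop} (h0 : P a)
    (hs : ∀ y z, T.graph.Adj y z → s(y, z) ≠ s(a, b) → y ∈ T.side a b → P y → P z) :
    ∀ x ∈ T.side a b, P x := by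
  have key : ∀ y x : V, (T.graph.deleteEdges {s(a, b)}).Walk y x →
      y ∈ T.side a b → P y → P x := by
    intro y x p
    induction p with
    | nil => exact fun _ h => h
    | cons hadj _ ih =>
      intro hy hP
      rw [SimpleGraph.deleteEdges_adj] at hadj
      have hne := hadj.2
      simp only [Set.mem_singleton_iff] at hne
      exact ih (T.side_step hadj.1 hne hy) (hs _ _ hadj.1 hne hy hP)
  intro x hx
  obtain ⟨p⟩ := hx
  exact key a x p (T.mem_side_self a b) h0

lemma not_mem_side {a b : V} (h : T.graph.Adj a b) : b ∉ T.side a b := by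
  have := SimpleGraph.isAcyclic_iff_forall_adj_isBridge.1 T.acyclic h
  rw [SimpleGraph.isBridge_iff] at this
  exact this

lemma mem_side_swap {a b : V} (h : T.graph.Adj a b) (x : V) :
    x ∈ T.side b a ↔ x ∉ T.side a b := by
  constructor
  · intro hx hx'
    have h1 : (T.graph.deleteEdges {s(b, a)}).Reachable b x := hx
    rw [Sym2.eq_swap] at h1
    have h2 : (T.graph.deleteEdges {s(a, b)}).Reachable a x := hx'
    exact T.not_mem_side h (h2.trans h1.symm)
  · intro hx
    have key : ∀ y z : V, T.graph.Walk y z → (y ∈ T.side a b ∨ y ∈ T.side b a) →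
        (z ∈ T.side a b ∨ z ∈ T.side b a) := by
      intro y z p
      induction p with
      | nil => exact fun h => h
      | @cons u w _ hadj _ ih =>
        intro hy
        apply ih
        by_cases he : s(u, w) = s(a, b)
        · rcases Sym2.eq_iff.1 he with ⟨_, rfl⟩ | ⟨_, rfl⟩
          · exact Or.inr (T.mem_side_self _ _)
          · exact Or.inl (T.mem_side_self _ _)
        · rcases hy with hy | hy
          · exact Or.inl (T.side_step hadj he hy)
          · exact Or.inr (T.side_step hadj (by rwa [Sym2.eq_swap (a := b)]) hy)
    obtain ⟨p⟩ := T.connected.preconnected a x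
    exact (key a x p (Or.inl (T.mem_side_self _ _))).resolve_left hx

lemma smul_mem_side (g : G) {a b x : V} (hx : x ∈ T.side a b) :
    T.smul g x ∈ T.side (T.smul g a) (T.smul g b) := by
  refine T.side_induction (P := fun x => T.smul g x ∈ T.side (T.smul g a) (T.smul g b))
    (T.mem_side_self _ _) ?_ x hx
  intro y z hadj hne _ hy
  refine T.side_step (T.adj_smul g _ _ hadj) ?_ hy
  intro he
  apply hne
  rcases Sym2.eq_iff.1 he with ⟨h1, h2⟩ | ⟨h1, h2⟩
  · rw [T.smul_inj g h1, T.smul_inj g h2]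
  · rw [T.smul_inj g h1, T.smul_inj g h2, Sym2.eq_swap]

lemma smul_mem_side_iff (g : G) {a b x : V} :
    T.smul g x ∈ T.side (T.smul g a) (T.smul g b) ↔ x ∈ T.side a b := by
  refine ⟨fun h => ?_, T.smul_mem_side g⟩
  simpa only [T.inv_smul_smul] using T.smul_mem_side g⁻¹ h

lemma inv_smul_mem_side_iff (g : G) {a b x : V} :
    T.smul g⁻¹ x ∈ T.side a b ↔ x ∈ T.side (T.smul g a) (T.smul g b) := by
  rw [← T.smul_mem_side_iff g, T.smul_inv_smul]

/-- Nesting of half-trees: if neither endpoint of `{c, d}` lies in the half-tree of `(a, b)`, that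
half-tree lies wholly on the side of `{c, d}` containing its root `a`. When `{c, d}` is an edge
other than `{a, b}`, it is enough to check one endpoint. -/
lemma side_subset {a b c d : V} (hc : c ∉ T.side a b) (ha : a ∈ T.side c d)
    (hd : d ∉ T.side a b ∨ s(a, b) ≠ s(c, d) ∧ T.graph.Adj c d) :
    T.side a b ⊆ T.side c d := by
  have hd' : d ∉ T.side a b := by
    rcases hd with hd | ⟨hne, hadj⟩
    · exact hd
    · intro h
      exact hc (T.side_step hadj.symm (by rw [Sym2.eq_swap]; exact hne.symm) h)
  refine T.side_induction ha ?_
  intro y z hadj _ hy hP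
  refine T.side_step hadj ?_ hP
  intro he
  rcases Sym2.eq_iff.1 he with ⟨rfl, _⟩ | ⟨rfl, _⟩
  · exact hc hy
  · exact hd' hy

lemma edge_ne_smul {a b : V} (h : T.graph.Adj a b) (g : G)
    (hg : ¬ (T.smul g a = a ∧ T.smul g b = b)) : s(a, b) ≠ s(T.smul g a, T.smul g b) := by
  intro he
  rcases Sym2.eq_iff.1 he with ⟨h1, h2⟩ | ⟨h1, h2⟩
  · exact hg ⟨h1.symm, h2.symm⟩
  · exact T.no_inversion g a b h ⟨h2.symm, h1.symm⟩

/-- A walk between different half-trees crosses the edge. -/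
lemma mem_edges_of_walk {a b : V} : ∀ {y z : V} (p : T.graph.Walk y z),
    y ∈ T.side a b → z ∉ T.side a b → s(a, b) ∈ p.edges := by
  intro y z p
  induction p with
  | nil => exact fun h h' => absurd h h'
  | @cons u w _ hadj _ ih =>
    intro hy hz
    rw [SimpleGraph.Walk.edges_cons, List.mem_cons]
    by_cases he : s(u, w) = s(a, b)
    · exact Or.inl he.symm
    · exact Or.inr (ih (T.side_step hadj he hy) hz)

/-- If `g` moves a half-tree strictly into a larger one, its iterates exhaust the tree: a path
from `a` to a vertex left out would cross infinitely many distinct edges. -/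
lemma exists_pow_mem {a b : V} (h : T.graph.Adj a b) (g : G)
    (hs : T.side a b ⊂ T.side (T.smul g a) (T.smul g b)) (x : V) :
    ∃ n : ℕ, x ∈ T.side (T.smul (g ^ n) a) (T.smul (g ^ n) b) := by
  by_contra! hx
  set S : ℕ → Set V := fun n => T.side (T.smul (g ^ n) a) (T.smul (g ^ n) b) with hS
  have hmono : StrictMono S := by
    refine strictMono_nat_of_lt_succ fun n => ?_
    have e : ∀ z, T.smul (g ^ (n + 1)) z = T.smul (g ^ n) (T.smul g z) := fun z => by
      rw [pow_succ, T.smul_mul]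
    constructor
    · intro z hz
      simp only [hS, e] at hz ⊢
      rw [← T.inv_smul_mem_side_iff] at hz ⊢
      exact hs.1 hz
    · intro hsub
      apply hs.2
      intro z hz
      have := @hsub (T.smul (g ^ n) z) (by
        simp only [hS, e]
        exact T.smul_mem_side _ hz)
      exact (T.smul_mem_side_iff _).1 this
  have ha : ∀ n, a ∈ S n := by
    intro n
    apply hmono.monotone (Nat.zero_le n)
    simp only [hS, pow_zero, T.smul_one]
    exact T.mem_side_self a b
  obtain ⟨p⟩ := T.connected.preconnected a x
  have hmem : ∀ n, s(T.smul (g ^ n) a, T.smul (g ^ n) b) ∈ p.edges := fun n =>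
    T.mem_edges_of_walk p (ha n) (hx n)
  have hinj : Function.Injective (fun n : ℕ => s(T.smul (g ^ n) a, T.smul (g ^ n) b)) := by
    intro m n hmn
    rcases Sym2.eq_iff.1 hmn with ⟨h1, h2⟩ | ⟨h1, h2⟩
    · apply hmono.injective
      simp only [hS, h1, h2]
    · exfalso
      -- oppositely oriented edges have complementary sides, yet both sides contain `a`
      have h3 := ha m
      simp only [hS, h1, h2] at h3
      exact (T.mem_side_swap (T.adj_smul (g ^ n) _ _ h) a).1 h3 (ha n)
  exact Set.infinite_of_injective_forall_mem hinj (s := {e | e ∈ p.edges}) hmem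
    (List.finite_toSet _)

/-! ### Splittings -/

lemma IsSplitting.swap {T : GTree G V} {a b : V} {K : Subgroup G} (h : T.IsSplitting a b K) :
    T.IsSplitting b a K := by
  obtain ⟨h1, h2, h3, h4⟩ := h
  refine ⟨h1.symm, h2, fun c d hcd => ?_, ?_⟩
  · obtain ⟨g, hg⟩ := h3 c d hcd
    exact ⟨g, by tauto⟩
  · rw [← h4]
    ext g
    exact and_comm

/-- In a splitting without elements taking `a` to `b`, the stabilizer of `a` moves `b`:
otherwise the tree would be a star centred at `b`, and `b` would be fixed by `G`. -/
lemma IsSplitting.exists_stab_moving {T : GTree G V} {a b : V} {K : Subgroup G}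
    (h : T.IsSplitting a b K) (hno : ∀ g : G, T.smul g a ≠ b) :
    ∃ k : G, T.smul k a = a ∧ T.smul k b ≠ b := by
  by_contra! hk
  obtain ⟨_, hfix, htrans, _⟩ := h
  have hno' : ∀ g g' : G, T.smul g a ≠ T.smul g' b := by
    intro g g' hg
    apply hno (g'⁻¹ * g)
    rw [T.smul_mul, hg, T.inv_smul_smul]
  have hleaf : ∀ (g : G) (z : V), T.graph.Adj (T.smul g a) z → z = T.smul g b := by
    intro g z hz
    obtain ⟨l, ⟨h1, h2⟩ | ⟨h1, h2⟩⟩ := htrans _ _ hz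
    · have := hk (g⁻¹ * l) (by rw [T.smul_mul, h1, T.inv_smul_smul])
      rw [T.smul_mul] at this
      rw [← h2, ← T.smul_inv_smul g (T.smul l b), this]
    · exact absurd h2.symm (hno' g l)
  have key : ∀ y z : V, T.graph.Walk y z →
      (y = b ∨ ∃ g, T.smul g a = y ∧ T.smul g b = b) →
      (z = b ∨ ∃ g, T.smul g a = z ∧ T.smul g b = b) := by
    intro y z p
    induction p with
    | nil => exact fun h => h
    | @cons u w _ hadj _ ih =>
      rintro (rfl | ⟨g, rfl, hg⟩)
      · obtain ⟨l, ⟨h1, h2⟩ | ⟨h1, h2⟩⟩ := htrans _ _ hadj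
        · exact absurd h1 (hno l)
        · exact ih (Or.inr ⟨l, h1, h2⟩)
      · exact ih (Or.inl ((hleaf g _ hadj).trans hg))
  obtain ⟨g, hg⟩ := hfix b
  obtain ⟨p⟩ := T.connected.preconnected b (T.smul g b)
  rcases key _ _ p (Or.inl rfl) with h1 | ⟨l, h1, _⟩
  · exact hg h1
  · exact hno' l g h1

/-- A splitting contains an element translating the chosen edge coherently. -/
lemma IsSplitting.exists_translate {T : GTree G V} {a b : V} {K : Subgroup G}
    (h : T.IsSplitting a b K) :
    ∃ t : G, T.side a b ⊂ T.side (T.smul t a) (T.smul t b) := by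
  have hab := h.1
  by_cases hno : ∃ g, T.smul g a = b
  · obtain ⟨g, hg⟩ := hno
    have hgb : T.smul g b ≠ a := fun h' => T.no_inversion g a b hab ⟨hg, h'⟩
    have hadj := T.adj_smul g _ _ hab
    refine ⟨g, ?_, fun hsub => ?_⟩
    · rw [hg] at hadj ⊢
      have hne : s(b, a) ≠ s(b, T.smul g b) := by
        intro he
        rcases Sym2.eq_iff.1 he with ⟨_, h2⟩ | ⟨_, h2⟩
        · exact hgb h2.symm
        · exact hab.ne h2
      refine T.side_subset (T.not_mem_side hab) ?_ (Or.inr ⟨?_, hadj⟩)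
      · exact T.side_step hab.symm hne (T.mem_side_self _ _)
      · rwa [Sym2.eq_swap]
    · apply T.not_mem_side hab
      apply hsub
      rw [hg]
      exact T.mem_side_self _ _
  · push Not at hno
    obtain ⟨k, hka, hkb⟩ := h.exists_stab_moving hno
    obtain ⟨l, hlb, hla⟩ := h.swap.exists_stab_moving (fun g hg => by
      apply hno g⁻¹
      rw [← hg, T.inv_smul_smul])
    -- the edge path `a, b, la, lkb` is coherently traversed by `lk`
    have hadj1 : T.graph.Adj b (T.smul l a) := by
      have := T.adj_smul l _ _ hab.symm
      rwa [hlb] at this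
    have e1 : T.smul (l * k) a = T.smul l a := by rw [T.smul_mul, hka]
    have hadj2 := T.adj_smul (l * k) _ _ hab
    have hlk : T.smul (l * k) b ≠ b := by
      rw [T.smul_mul]
      intro h'
      exact hkb (T.smul_inj l (h'.trans hlb.symm))
    have hla_side : T.smul l a ∈ T.side b a := by
      refine T.side_step hadj1 ?_ (T.mem_side_self _ _)
      intro he
      rcases Sym2.eq_iff.1 he with ⟨_, h2⟩ | ⟨h1, _⟩
      · exact hla h2
      · exact hab.ne h1.symm
    have hne : s(a, b) ≠ s(T.smul (l * k) a, T.smul (l * k) b) := by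
      apply T.edge_ne_smul hab
      rintro ⟨h1, _⟩
      exact hla (e1.symm.trans h1)
    have hb : b ∈ T.side (T.smul (l * k) a) (T.smul (l * k) b) := by
      have hs : T.smul (l * k) a ∈ T.side (T.smul (l * k) a) (T.smul (l * k) b) :=
        T.mem_side_self _ _
      refine T.side_step (y := T.smul (l * k) a) (by rw [e1]; exact hadj1.symm) ?_ hs
      intro he
      rcases Sym2.eq_iff.1 he with ⟨_, h2⟩ | ⟨h1, _⟩
      · exact hlk h2.symm
      · exact hadj2.ne h1
    refine ⟨l * k, ?_, fun hsub => T.not_mem_side hab (hsub hb)⟩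
    refine T.side_subset ?_ (T.side_step hab.symm (by rwa [Sym2.eq_swap]) hb)
      (Or.inr ⟨hne, hadj2⟩)
    rw [e1]
    exact (T.mem_side_swap hab _).1 hla_side

end GTree

/-! ### Almost invariant sets of splittings -/

/-- `s` maps `Y` into itself by left multiplication, and every element of the group is moved
into `Y` by some power of `s`. -/
def IsAbsorbing {G : Type u} [Group G] (s : G) (Y : Set G) : Prop :=
  (∀ x ∈ Y, s * x ∈ Y) ∧ ∀ x, ∃ n : ℕ, s ^ n * x ∈ Y

/-- The properties of the almost invariant set `Y` of a splitting over `K` used in the proof.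
The clauses are symmetric under replacing `Y` by its complement. -/
structure SplitLike {G : Type u} [Group G] (K : Subgroup G) (Y : Set G) : Prop where
  inv : ∀ g ∈ K, ∀ x, g * x ∈ Y ↔ x ∈ Y
  abs : ∃ s, IsAbsorbing s Y
  abs_compl : ∃ s, IsAbsorbing s Yᶜ
  cases : ∀ g, g ∉ K → IsAbsorbing g Y ∨ IsAbsorbing g⁻¹ Y ∨
    IsAbsorbing g Yᶜ ∨ IsAbsorbing g⁻¹ Yᶜ ∨
    (∀ x ∈ Y, g * x ∈ Yᶜ) ∨ (∀ x ∈ Yᶜ, g * x ∈ Y)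

lemma GTree.absorbs_of_ssubset {G : Type u} [Group G] {V : Type v} (T : GTree G V) {a b : V}
    (h : T.graph.Adj a b) (v : V) (g : G)
    (hs : T.side a b ⊂ T.side (T.smul g a) (T.smul g b)) :
    IsAbsorbing g⁻¹ (T.standardSet a b v) := by
  constructor
  · intro x hx
    change T.smul (g⁻¹ * x) v ∈ T.side a b
    rw [T.smul_mul, T.inv_smul_mem_side_iff]
    exact hs.1 hx
  · intro x
    obtain ⟨n, hn⟩ := T.exists_pow_mem h g hs (T.smul x v)
    refine ⟨n, ?_⟩
    change T.smul (g⁻¹ ^ n * x) v ∈ T.side a b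
    rwa [inv_pow, T.smul_mul, T.inv_smul_mem_side_iff]

lemma GTree.standardSet_compl {G : Type u} [Group G] {V : Type v} (T : GTree G V) {a b : V}
    (h : T.graph.Adj a b) (v : V) : (T.standardSet a b v)ᶜ = T.standardSet b a v := by
  ext g
  exact (T.mem_side_swap h _).symm

lemma GTree.IsSplitting.splitLike {G : Type u} [Group G] {V : Type v} {T : GTree G V} {a b : V}
    {K : Subgroup G} (h : T.IsSplitting a b K) (v : V) : SplitLike K (T.standardSet a b v) := by
  have hab := h.1
  refine ⟨?_, ?_, ?_, ?_⟩
  · intro g hg x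
    rw [← h.2.2.2] at hg
    obtain ⟨h1, h2⟩ : T.smul g a = a ∧ T.smul g b = b := hg
    change T.smul (g * x) v ∈ T.side a b ↔ T.smul x v ∈ T.side a b
    have h3 := T.smul_mem_side_iff g (a := a) (b := b) (x := T.smul x v)
    rwa [h1, h2, ← T.smul_mul] at h3
  · obtain ⟨t, ht⟩ := h.exists_translate
    exact ⟨t⁻¹, T.absorbs_of_ssubset hab v t ht⟩
  · rw [T.standardSet_compl hab]
    obtain ⟨t, ht⟩ := h.swap.exists_translate
    exact ⟨t⁻¹, T.absorbs_of_ssubset hab.symm v t ht⟩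
  · intro g hg
    have hne : s(a, b) ≠ s(T.smul g a, T.smul g b) := by
      apply T.edge_ne_smul hab
      intro h'
      apply hg
      rw [← h.2.2.2]
      exact h'
    have hadj := T.adj_smul g _ _ hab
    have hmem : ∀ x, T.smul x v ∈ T.side (T.smul g a) (T.smul g b) ↔
        g⁻¹ * x ∈ T.standardSet a b v := by
      intro x
      rw [← T.inv_smul_mem_side_iff, ← T.smul_mul]
      rfl
    by_cases hc : T.smul g a ∈ T.side a b
    · have hc' := fun h' => (T.mem_side_swap hab _).1 h' hc
      by_cases ha : a ∈ T.side (T.smul g a) (T.smul g b)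
      · have hb := T.side_step hab hne ha
        have hsub : T.side b a ⊆ T.side (T.smul g a) (T.smul g b) :=
          T.side_subset hc' hb (Or.inr ⟨by rwa [Sym2.eq_swap], hadj⟩)
        refine Or.inr (Or.inr (Or.inr (Or.inr (Or.inr ?_))))
        intro x hx
        by_contra hgx
        apply hx
        have : T.smul (g * x) v ∈ T.side b a := (T.mem_side_swap hab _).2 hgx
        have := (hmem _).1 (hsub this)
        rwa [inv_mul_cancel_left] at this
      · have hsub : T.side (T.smul g a) (T.smul g b) ⊆ T.side a b :=
          T.side_subset ha hc (Or.inr ⟨hne.symm, hab⟩)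
        refine Or.inl ?_
        have := T.absorbs_of_ssubset hab v g⁻¹ ?_
        · rwa [inv_inv] at this
        constructor
        · intro x hx
          rw [← T.inv_smul_mem_side_iff, inv_inv]
          exact hsub (T.smul_mem_side g hx)
        · intro hsub'
          apply ha
          rw [← T.inv_smul_mem_side_iff]
          exact hsub' (T.smul_mem_side _ (T.mem_side_self a b))
    · by_cases ha : a ∈ T.side (T.smul g a) (T.smul g b)
      · have hsub : T.side a b ⊆ T.side (T.smul g a) (T.smul g b) :=
          T.side_subset hc ha (Or.inr ⟨hne, hadj⟩)
        exact Or.inr (Or.inl (T.absorbs_of_ssubset hab v g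
          ⟨hsub, fun h' => hc (h' (T.mem_side_self _ _))⟩))
      · have ha' := (T.mem_side_swap hadj a).2 ha
        have hd : T.smul g b ∉ T.side a b := fun h' =>
          hc (T.side_step hadj.symm (by rw [Sym2.eq_swap]; exact hne.symm) h')
        have hsub : T.side a b ⊆ T.side (T.smul g b) (T.smul g a) :=
          T.side_subset hd ha' (Or.inl hc)
        refine Or.inr (Or.inr (Or.inr (Or.inr (Or.inl ?_))))
        intro x hx hgx
        have h1 := (T.mem_side_swap hadj _).1 (hsub hgx)
        rw [hmem, inv_mul_cancel_left] at h1
        exact h1 hx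

section Finiteness

variable {G : Type u} [Group G] {H K : Subgroup G} {X Y : Set G}

lemma SplitLike.compl (h : SplitLike K Y) : SplitLike K Yᶜ := by
  refine ⟨fun g hg x => not_congr (h.inv g hg x), h.abs_compl, ?_, fun g hg => ?_⟩
  · rw [compl_compl]
    exact h.abs
  · rw [compl_compl]
    have := h.cases g hg
    tauto

lemma HFinite.mono {S S' : Set G} (h : HFinite H S) (hs : S' ⊆ S) : HFinite H S' := by
  obtain ⟨F, hF⟩ := h
  exact ⟨F, hs.trans hF⟩

lemma HFinite.union {S S' : Set G} (h : HFinite H S) (h' : HFinite H S') :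
    HFinite H (S ∪ S') := by
  classical
  obtain ⟨F, hF⟩ := h
  obtain ⟨F', hF'⟩ := h'
  refine ⟨F ∪ F', ?_⟩
  rw [Finset.set_biUnion_union]
  exact Set.union_subset_union hF hF'

lemma HFinite.mono_subgroup {S : Set G} (hHK : H ≤ K) (h : HFinite H S) : HFinite K S := by
  obtain ⟨F, hF⟩ := h
  exact ⟨F, hF.trans (Set.iUnion₂_mono fun g _ => Set.mul_subset_mul_right hHK)⟩

lemma mem_coset_union {F : Finset G} {x : G} :
    x ∈ (⋃ g ∈ F, (H : Set G) * {g}) ↔ ∃ g ∈ F, x * g⁻¹ ∈ H := by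
  simp only [Set.mem_iUnion, Set.mul_singleton, Set.mem_image, SetLike.mem_coe, exists_prop]
  constructor
  · rintro ⟨g, hg, h, hh, rfl⟩
    exact ⟨g, hg, by simpa using hh⟩
  · rintro ⟨g, hg, hh⟩
    exact ⟨g, hg, _, hh, by simp⟩

/-- An `H`-finite set lies in an `H`-finite set that is invariant under left multiplication
by `H`. -/
lemma HFinite.exists_saturated {S : Set G} (h : HFinite H S) :
    ∃ S', S ⊆ S' ∧ HFinite H S' ∧ ∀ g ∈ H, ∀ x, g * x ∈ S' ↔ x ∈ S' := by
  obtain ⟨F, hF⟩ := h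
  refine ⟨_, hF, ⟨F, subset_rfl⟩, fun g hg x => ?_⟩
  simp only [mem_coset_union, mul_assoc, H.mul_mem_cancel_left hg]

lemma IsAbsorbing.pow_mem {s : G} (h : IsAbsorbing s Y) (n : ℕ) {x : G} (hx : x ∈ Y) :
    s ^ n * x ∈ Y := by
  induction n with
  | zero => simpa using hx
  | succ n ih =>
    rw [pow_succ', mul_assoc]
    exact h.1 _ ih

/-- A positive power of an absorbing element is absorbing. -/
lemma IsAbsorbing.pow {s : G} (h : IsAbsorbing s Y) {m : ℕ} (hm : 0 < m) :
    IsAbsorbing (s ^ m) Y := by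
  refine ⟨fun x hx => h.pow_mem m hx, fun x => ?_⟩
  obtain ⟨n, hn⟩ := h.2 x
  refine ⟨n, ?_⟩
  obtain ⟨k, hk⟩ := Nat.exists_eq_add_of_le (Nat.le_mul_of_pos_left n hm)
  rw [← pow_mul, hk, add_comm, pow_add, mul_assoc]
  exact h.pow_mem k hn

/-- The powers of `s` eventually lie in `Y`, hence two of them lie in the same coset of `H`. -/
lemma IsAbsorbing.exists_pow_mem {s : G} (h : IsAbsorbing s Y) (hY : HFinite H Y) :
    ∃ m : ℕ, 0 < m ∧ s ^ m ∈ H := by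
  obtain ⟨N, hN⟩ := h.2 1
  obtain ⟨F, hF⟩ := hY
  have hmem : ∀ n : ℕ, ∃ g : F, s ^ (n + N) * (g : G)⁻¹ ∈ H := by
    intro n
    have h1 := h.pow_mem n hN
    rw [mul_one, ← pow_add] at h1
    obtain ⟨g, hg, h2⟩ := mem_coset_union.1 (hF h1)
    exact ⟨⟨g, hg⟩, h2⟩
  choose f hf using hmem
  obtain ⟨i, j, hij, he⟩ := Finite.exists_ne_map_eq_of_infinite f
  have key : ∀ i j : ℕ, i < j → f i = f j → ∃ m : ℕ, 0 < m ∧ s ^ m ∈ H := by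
    intro i j hij he
    refine ⟨j - i, Nat.sub_pos_of_lt hij, ?_⟩
    have h1 := H.mul_mem (hf j) (H.inv_mem (hf i))
    rw [he] at h1
    have h2 : s ^ (j + N) = s ^ (j - i) * s ^ (i + N) := by
      rw [← pow_add]
      congr 1
      omega
    rw [h2] at h1
    simpa [mul_assoc] using h1
  rcases lt_or_gt_of_ne hij with h' | h'
  · exact key i j h' he
  · exact key j i h' he.symm

lemma SplitLike.not_hFinite_self (hX : SplitLike H X) : ¬ HFinite H X := by
  intro hfin
  obtain ⟨s, hs⟩ := hX.abs
  obtain ⟨m, hm, hsm⟩ := hs.exists_pow_mem hfin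
  obtain ⟨s', hs'⟩ := hX.abs_compl
  obtain ⟨n, hn⟩ := hs'.2 1
  obtain ⟨k, hk⟩ := (hs.pow hm).2 (s' ^ n * 1)
  exact hn ((hX.inv _ (H.pow_mem hsm k) _).1 hk)

/-- The standard set of a splitting over any subgroup `K` is not `H`-finite, provided `G` splits
over `H`: a power of an absorbing element of `Y` would lie in `H` and spread the `H`-finiteness
of `Y` to all of `G`. -/
lemma SplitLike.not_hFinite (hX : SplitLike H X) (hY : SplitLike K Y) : ¬ HFinite H Y := by
  intro hfin
  obtain ⟨s, hs⟩ := hY.abs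
  obtain ⟨m, hm, hsm⟩ := hs.exists_pow_mem hfin
  obtain ⟨S, hYS, hS, hinv⟩ := hfin.exists_saturated
  refine hX.not_hFinite_self (hS.mono fun x _ => ?_)
  obtain ⟨k, hk⟩ := (hs.pow hm).2 x
  exact (hinv _ (H.pow_mem hsm k) _).1 (hYS hk)

lemma SplitLike.le (hX : SplitLike H X) (hY : SplitLike K Y)
    (hD : HFinite H ((X \ Y) ∪ (Y \ X))) : H ≤ K := by
  intro h hh
  by_contra hK
  obtain ⟨S, hDS, hS, hinv⟩ := hD.exists_saturated
  have hXY : ∀ x ∉ S, (x ∈ X ↔ x ∈ Y) := by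
    intro x hx
    have hx' : x ∉ (X \ Y) ∪ (Y \ X) := fun h' => hx (hDS h')
    simp only [Set.mem_union, Set.mem_sdiff] at hx'
    tauto
  have hstab : ∀ g ∈ H, ∀ x ∉ S, (g * x ∈ Y ↔ x ∈ Y) := by
    intro g hg x hx
    rw [← hXY x hx, ← hXY (g * x) (by rwa [hinv g hg]), hX.inv g hg]
  have hY1 : ¬ Y ⊆ S := fun h' => hX.not_hFinite hY (hS.mono h')
  have hY2 : ¬ Yᶜ ⊆ S := fun h' => hX.not_hFinite hY.compl (hS.mono h')
  have habs : ∀ g ∈ H, ¬ IsAbsorbing g Y := by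
    intro g hg hab
    apply hY2
    intro x hx
    by_contra hxS
    obtain ⟨n, hn⟩ := hab.2 x
    exact hx ((hstab _ (H.pow_mem hg n) x hxS).1 hn)
  have habs' : ∀ g ∈ H, ¬ IsAbsorbing g Yᶜ := by
    intro g hg hab
    apply hY1
    intro x hx
    by_contra hxS
    obtain ⟨n, hn⟩ := hab.2 x
    exact hn ((hstab _ (H.pow_mem hg n) x hxS).2 hx)
  rcases hY.cases h hK with h' | h' | h' | h' | h' | h'
  · exact habs _ hh h'
  · exact habs _ (H.inv_mem hh) h'
  · exact habs' _ hh h'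
  · exact habs' _ (H.inv_mem hh) h'
  · refine hY1 fun x hx => ?_
    by_contra hxS
    exact h' x hx ((hstab h hh x hxS).2 hx)
  · refine hY2 fun x hx => ?_
    by_contra hxS
    exact hx ((hstab h hh x hxS).1 (h' x hx))

lemma SplitLike.eq (hX : SplitLike H X) (hY : SplitLike K Y)
    (h1 : HFinite H (X ∩ Yᶜ)) (h2 : HFinite H (Xᶜ ∩ Y)) : H = K := by
  have hD : HFinite H ((X \ Y) ∪ (Y \ X)) := by
    refine (h1.union h2).mono ?_
    rw [Set.inter_comm Xᶜ]
    exact subset_rfl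
  have hle := hX.le hY hD
  refine le_antisymm hle (hY.le hX ?_)
  rw [Set.union_comm]
  exact hD.mono_subgroup hle

end Finiteness

/-- if `X` and `Y` arise from splittings of `G` over `H` and `K`
respectively, and two of the four corners of `(X, Y)` are `H`-finite, then `H = K`. -/
theorem statement4 {G : Type u} [Group G] {V₁ : Type v} {V₂ : Type w} (H K : Subgroup G)
    (T₁ : GTree G V₁) (a₁ b₁ : V₁) (h₁ : T₁.IsSplitting a₁ b₁ H) (v₁ : V₁)
    (X : Set G) (hX : X = T₁.standardSet a₁ b₁ v₁)
    (T₂ : GTree G V₂) (a₂ b₂ : V₂) (h₂ : T₂.IsSplitting a₂ b₂ K) (v₂ : V₂)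
    (Y : Set G) (hY : Y = T₂.standardSet a₂ b₂ v₂)
    (h2 : TwoOfFour (HFinite H (X ∩ Y)) (HFinite H (X ∩ Yᶜ))
      (HFinite H (Xᶜ ∩ Y)) (HFinite H (Xᶜ ∩ Yᶜ))) :
    H = K := by
  have sX : SplitLike H X := hX ▸ h₁.splitLike v₁
  have sY : SplitLike K Y := hY ▸ h₂.splitLike v₂
  rcases h2 with ⟨p, q⟩ | ⟨p, q⟩ | ⟨p, q⟩ | ⟨p, q⟩ | ⟨p, q⟩ | ⟨p, q⟩
  · refine absurd ((p.union q).mono ?_) sX.not_hFinite_self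
    rw [Set.inter_union_compl]
  · refine absurd ((p.union q).mono ?_) (sX.not_hFinite sY)
    rw [← Set.union_inter_distrib_right, Set.union_compl_self, Set.univ_inter]
  · exact sX.eq sY.compl (by rwa [compl_compl]) q
  · exact sX.eq sY p q
  · refine absurd ((p.union q).mono ?_) (sX.not_hFinite sY.compl)
    rw [← Set.union_inter_distrib_right, Set.union_compl_self, Set.univ_inter]
  · refine absurd ((p.union q).mono ?_) sX.compl.not_hFinite_self
    rw [Set.inter_union_compl]
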